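/- arXiv:2510.25611 — 10 statements merged into one kernel-verified Lean document; each statement's English description precedes it below -/
import Mathlib

section
/- Fix integers a, b ≥ 1 and θ ∈ (0, π/2). Define the normal exponential map E(t, (u, v)) = (cos(θ + t)·u, sin(θ + t)·v) for t ∈ ℝ and unit vectors u ∈ ℝ^a, v ∈ ℝ^b. Then for every point (x, y) ∈ ℝ^a × ℝ^b with ‖x‖² + ‖y‖² = 1, x ≠ 0 and y ≠ 0, there exist exactly 4 triples (t, u, v) with t ∈ (−π, π], ‖u‖ = 1, ‖v‖ = 1 and E(t, (u, v)) = (x, y). -/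
theorem angle_exists (θ c s : ℝ) (h : c ^ 2 + s ^ 2 = 1) :
    ∃ t ∈ Set.Ioc (-Real.pi) Real.pi, Real.cos (θ + t) = c ∧ Real.sin (θ + t) = s := by
  have hn : ‖(⟨c, s⟩ : ℂ)‖ = 1 := by
    rw [Complex.norm_eq_sqrt_sq_add_sq, h, Real.sqrt_one]
  have hz : (⟨c, s⟩ : ℂ) ≠ 0 := by
    intro h0
    rw [h0] at hn
    simp at hn
  have hk : ((θ + (((Complex.arg ⟨c, s⟩ - θ : ℝ) : Real.Angle).toReal) : ℝ) : Real.Angle)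
      = ((Complex.arg ⟨c, s⟩ : ℝ) : Real.Angle) := by
    rw [Real.Angle.coe_add, Real.Angle.coe_toReal, ← Real.Angle.coe_add]
    congr 1
    ring
  refine ⟨((Complex.arg ⟨c, s⟩ - θ : ℝ) : Real.Angle).toReal,
    ⟨Real.Angle.neg_pi_lt_toReal _, Real.Angle.toReal_le_pi _⟩, ?_, ?_⟩
  · rw [← Real.Angle.cos_coe, hk, Real.Angle.cos_coe, Complex.cos_arg hz, hn]
    simp
  · rw [← Real.Angle.sin_coe, hk, Real.Angle.sin_coe, Complex.sin_arg, hn]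
    simp

theorem angle_unique (θ t t' : ℝ) (ht : t ∈ Set.Ioc (-Real.pi) Real.pi)
    (ht' : t' ∈ Set.Ioc (-Real.pi) Real.pi) (hc : Real.cos (θ + t) = Real.cos (θ + t'))
    (hs : Real.sin (θ + t) = Real.sin (θ + t')) : t = t' := by
  have h := Real.Angle.cos_sin_inj hc hs
  rw [Real.Angle.coe_add, Real.Angle.coe_add] at h
  have h2 := congrArg Real.Angle.toReal (add_left_cancel h)
  rwa [Real.Angle.toReal_coe_eq_self_iff.2 ht, Real.Angle.toReal_coe_eq_self_iff.2 ht'] at h2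

/-- For the isoparametric family of products of spheres with `g = 2` principal curvatures,
every point `(x, y)` of the unit sphere of `ℝ^a × ℝ^b` not on the focal set (i.e. with
`x ≠ 0` and `y ≠ 0`) has exactly `4 = 2g` inverse images under the normal exponential map
`E(t, (u, v)) = (cos(θ+t)·u, sin(θ+t)·v)` with `t ∈ (−π, π]`. -/
theorem normal_exponential_map_fibre_has_four_points
    (a b : ℕ) (ha : 1 ≤ a) (hb : 1 ≤ b) (θ : ℝ) (hθ0 : 0 < θ) (hθ1 : θ < Real.pi / 2)
    (x : EuclideanSpace ℝ (Fin a)) (y : EuclideanSpace ℝ (Fin b))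
    (hxy : ‖x‖ ^ 2 + ‖y‖ ^ 2 = 1) (hx : x ≠ 0) (hy : y ≠ 0) :
    Set.ncard {T : ℝ × (EuclideanSpace ℝ (Fin a) × EuclideanSpace ℝ (Fin b)) |
        T.1 ∈ Set.Ioc (-Real.pi) Real.pi ∧ ‖T.2.1‖ = 1 ∧ ‖T.2.2‖ = 1 ∧
        (Real.cos (θ + T.1) • T.2.1, Real.sin (θ + T.1) • T.2.2) = (x, y)} = 4 := by
  have hp : 0 < ‖x‖ := norm_pos_iff.2 hx
  have hq : 0 < ‖y‖ := norm_pos_iff.2 hy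
  set S := {T : ℝ × (EuclideanSpace ℝ (Fin a) × EuclideanSpace ℝ (Fin b)) |
        T.1 ∈ Set.Ioc (-Real.pi) Real.pi ∧ ‖T.2.1‖ = 1 ∧ ‖T.2.2‖ = 1 ∧
        (Real.cos (θ + T.1) • T.2.1, Real.sin (θ + T.1) • T.2.2) = (x, y)} with hS
  let G : ℝ × (EuclideanSpace ℝ (Fin a) × EuclideanSpace ℝ (Fin b)) → ℝ × ℝ :=
    fun T => (Real.cos (θ + T.1), Real.sin (θ + T.1))
  have hinj : Set.InjOn G S := by
    rintro ⟨t, u, v⟩ ⟨ht, -, -, he⟩ ⟨t', u', v'⟩ ⟨ht', -, -, he'⟩ hG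
    simp only [G, Prod.mk.injEq] at hG he he' ht ht'
    have htt : t = t' := angle_unique θ t t' ht ht' hG.1 hG.2
    subst htt
    have hc : Real.cos (θ + t) ≠ 0 := by
      intro h0
      rw [h0, zero_smul] at he
      exact hx he.1.symm
    have hs : Real.sin (θ + t) ≠ 0 := by
      intro h0
      rw [h0, zero_smul] at he
      exact hy he.2.symm
    have hu : u = u' := smul_right_injective _ hc (he.1.trans he'.1.symm)
    have hv : v = v' := smul_right_injective _ hs (he.2.trans he'.2.symm)
    rw [hu, hv]
  have himg : G '' S = (({‖x‖, -‖x‖} : Set ℝ) ×ˢ ({‖y‖, -‖y‖} : Set ℝ)) := by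
    ext ⟨c, s⟩
    simp only [Set.mem_prod, Set.mem_insert_iff, Set.mem_singleton_iff]
    constructor
    · rintro ⟨⟨t, u, v⟩, ⟨-, hu, hv, he⟩, hG⟩
      simp only [G, Prod.mk.injEq] at hG he hu hv
      have h1 := congrArg norm he.1
      have h2 := congrArg norm he.2
      rw [norm_smul, hu, mul_one, Real.norm_eq_abs, hG.1] at h1
      rw [norm_smul, hv, mul_one, Real.norm_eq_abs, hG.2] at h2
      exact ⟨eq_or_eq_neg_of_abs_eq h1, eq_or_eq_neg_of_abs_eq h2⟩
    · rintro ⟨hc, hs⟩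
      have hca : |c| = ‖x‖ := by rcases hc with h | h <;> simp [h]
      have hsa : |s| = ‖y‖ := by rcases hs with h | h <;> simp [h]
      have hc0 : c ≠ 0 := by rw [← abs_pos, hca]; exact hp
      have hs0 : s ≠ 0 := by rw [← abs_pos, hsa]; exact hq
      obtain ⟨t, ht, htc, hts⟩ := angle_exists θ c s (by
        rw [← sq_abs c, ← sq_abs s, hca, hsa, hxy])
      refine ⟨(t, c⁻¹ • x, s⁻¹ • y), ⟨ht, ?_, ?_, ?_⟩, ?_⟩
      · simp only [norm_smul, norm_inv, Real.norm_eq_abs, hca]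
        exact inv_mul_cancel₀ hp.ne'
      · simp only [norm_smul, norm_inv, Real.norm_eq_abs, hsa]
        exact inv_mul_cancel₀ hq.ne'
      · simp only [htc, hts, smul_inv_smul₀ hc0, smul_inv_smul₀ hs0]
      · simp only [G, htc, hts]
  rw [← Set.ncard_image_of_injOn hinj, himg, Set.ncard_prod,
    Set.ncard_pair (by intro h; linarith : ‖x‖ ≠ -‖x‖ ), Set.ncard_pair (by intro h; linarith : ‖y‖ ≠ -‖y‖ )]
end

section
/- Fix integers a, b ≥ 1, θ ∈ (0, π/2), and p = (x, y) ∈ ℝ^a × ℝ^b with x ≠ 0 and y ≠ 0. Consider the smooth function g(u, v) = cos θ·⟪x, u⟫ + sin θ·⟪y, v⟫ on the product S^{a−1} × S^{b−1} of unit spheres (the height function ℓ_p composed with the embedding (u,v) ↦ (cos θ·u, sin θ·v)). Then the set of points where the differential (mfderiv) of g vanishes is exactly { (ε·x/‖x‖, δ·y/‖y‖) : ε, δ ∈ {+1, −1} }, and in particular g has exactly 4 critical points. -/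
open scoped RealInnerProductSpace Manifold

noncomputable instance factFinrankEuclidean (n : ℕ) :
    Fact (Module.finrank ℝ (EuclideanSpace ℝ (Fin (n + 1))) = n + 1) :=
  ⟨finrank_euclideanSpace_fin⟩

lemma crit_orth {n : ℕ} (u x : EuclideanSpace ℝ (Fin (n+1))) (hu : ‖u‖ = 1) (hx : x ≠ 0) :
    (∀ w ∈ (Submodule.span ℝ {u})ᗮ, ⟪x, w⟫ = 0) ↔ ∃ ε : ℝ, (ε = 1 ∨ ε = -1) ∧ u = ε • ‖x‖⁻¹ • x := by
  have hn : ‖x‖ ≠ 0 := norm_ne_zero_iff.2 hx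
  constructor
  · intro h
    have h1 : x ∈ (Submodule.span ℝ {u})ᗮᗮ := by
      rw [Submodule.mem_orthogonal']
      exact h
    rw [Submodule.orthogonal_orthogonal, Submodule.mem_span_singleton] at h1
    obtain ⟨c, rfl⟩ := h1
    have hc : c ≠ 0 := by rintro rfl; simp at hx
    rw [norm_smul, hu, mul_one, Real.norm_eq_abs]
    rcases abs_cases c with ⟨h, _⟩ | ⟨h, _⟩
    · exact ⟨1, Or.inl rfl, by rw [h, smul_smul, smul_smul]; simp [hc]⟩
    · exact ⟨-1, Or.inr rfl, by rw [h, smul_smul, smul_smul]; field_simp; simp⟩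
  · rintro ⟨ε, hε, rfl⟩ w hw
    rw [Submodule.mem_orthogonal_singleton_iff_inner_right, smul_smul, inner_smul_left] at hw
    have : ε ≠ 0 := by rcases hε with rfl | rfl <;> norm_num
    simpa [this, hx] using hw

lemma hasD {n : ℕ} (x : EuclideanSpace ℝ (Fin (n+1))) (c : ℝ)
    (u : Metric.sphere (0 : EuclideanSpace ℝ (Fin (n + 1))) 1) :
    HasMFDerivAt (𝓡 n) 𝓘(ℝ, ℝ)
      (fun u : Metric.sphere (0 : EuclideanSpace ℝ (Fin (n + 1))) 1 =>
        c * ⟪x, (u : EuclideanSpace ℝ (Fin (n + 1)))⟫) u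
      ((c • innerSL ℝ x).comp (mfderiv (𝓡 n) 𝓘(ℝ, EuclideanSpace ℝ (Fin (n + 1)))
        (fun u : Metric.sphere (0 : EuclideanSpace ℝ (Fin (n + 1))) 1 =>
          (u : EuclideanSpace ℝ (Fin (n + 1)))) u)) := by
  have h1 := ((contMDiff_coe_sphere (m := 1) (E := EuclideanSpace ℝ (Fin (n+1))) (n := n)).mdifferentiable
    (by simp) u).hasMFDerivAt
  have h2 := (c • innerSL ℝ x).hasMFDerivAt (x := (u : EuclideanSpace ℝ (Fin (n+1))))
  have h3 := HasMFDerivAt.comp u h2 h1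
  exact h3

lemma hasD_zero {n : ℕ} (x : EuclideanSpace ℝ (Fin (n+1))) (hx : x ≠ 0) (c : ℝ) (hc : c ≠ 0)
    (u : Metric.sphere (0 : EuclideanSpace ℝ (Fin (n + 1))) 1) :
    mfderiv (𝓡 n) 𝓘(ℝ, ℝ)
      (fun u : Metric.sphere (0 : EuclideanSpace ℝ (Fin (n + 1))) 1 =>
        c * ⟪x, (u : EuclideanSpace ℝ (Fin (n + 1)))⟫) u = 0 ↔
    ∃ ε : ℝ, (ε = 1 ∨ ε = -1) ∧ (u : EuclideanSpace ℝ (Fin (n + 1))) = ε • ‖x‖⁻¹ • x := by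
  rw [(hasD x c u).mfderiv, ← crit_orth _ x (by simp) hx]
  have hr := range_mfderiv_coe_sphere (n := n) u
  constructor
  · intro h w hw
    rw [← hr] at hw
    obtain ⟨t, rfl⟩ := hw
    have := congrArg (fun L => L t) h
    have h2 : c * ⟪x, _⟫ = 0 := this
    exact (mul_eq_zero.1 h2).resolve_left hc
  · intro h
    ext t
    have h1 := LinearMap.mem_range_self (mfderiv (𝓡 n) 𝓘(ℝ, EuclideanSpace ℝ (Fin (n + 1)))
        (fun u : Metric.sphere (0 : EuclideanSpace ℝ (Fin (n + 1))) 1 =>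
          (u : EuclideanSpace ℝ (Fin (n + 1)))) u).toLinearMap t
    have h2 := h _ (hr.le h1)
    show c * ⟪x, _⟫ = 0
    rw [mul_eq_zero]; right; exact h2

lemma lin_zero {E F : Type*} [NormedAddCommGroup E] [NormedSpace ℝ E] [NormedAddCommGroup F]
    [NormedSpace ℝ F] (A : E →L[ℝ] ℝ) (B : F →L[ℝ] ℝ) :
    A.comp (ContinuousLinearMap.fst ℝ E F) + B.comp (ContinuousLinearMap.snd ℝ E F) = 0 ↔
      A = 0 ∧ B = 0 := by
  constructor
  · intro h
    constructor
    · ext1 t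
      simpa using congrArg (fun L => L (t, 0)) h
    · ext1 t
      simpa using congrArg (fun L => L (0, t)) h
  · rintro ⟨rfl, rfl⟩
    simp

lemma prod_zero (a b : ℕ) 
   (f : Metric.sphere (0 : EuclideanSpace ℝ (Fin (a + 1))) 1 → ℝ)
   (g : Metric.sphere (0 : EuclideanSpace ℝ (Fin (b + 1))) 1 → ℝ)
   (q : Metric.sphere (0 : EuclideanSpace ℝ (Fin (a + 1))) 1 ×
          Metric.sphere (0 : EuclideanSpace ℝ (Fin (b + 1))) 1)
   (hf : MDifferentiableAt (𝓡 a) 𝓘(ℝ, ℝ) f q.1)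
   (hg : MDifferentiableAt (𝓡 b) 𝓘(ℝ, ℝ) g q.2) :
   mfderiv ((𝓡 a).prod (𝓡 b)) 𝓘(ℝ, ℝ) (fun q : Metric.sphere (0 : EuclideanSpace ℝ (Fin (a + 1))) 1 ×
          Metric.sphere (0 : EuclideanSpace ℝ (Fin (b + 1))) 1 => f q.1 + g q.2) q = 0 ↔
   mfderiv (𝓡 a) 𝓘(ℝ, ℝ) f q.1 = 0 ∧ mfderiv (𝓡 b) 𝓘(ℝ, ℝ) g q.2 = 0 := by
  have h1 := HasMFDerivAt.comp q hf.hasMFDerivAt (hasMFDerivAt_fst (I := 𝓡 a) (I' := 𝓡 b) q)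
  have h2 := HasMFDerivAt.comp q hg.hasMFDerivAt (hasMFDerivAt_snd (I := 𝓡 a) (I' := 𝓡 b) q)
  have h3 := (HasMFDerivAt.add h1 h2).mfderiv
  have h4 : (f ∘ Prod.fst + g ∘ Prod.snd) = (fun q : Metric.sphere (0 : EuclideanSpace ℝ (Fin (a + 1))) 1 ×
          Metric.sphere (0 : EuclideanSpace ℝ (Fin (b + 1))) 1 => f q.1 + g q.2) := rfl
  rw [h4] at h3
  rw [h3]
  generalize mfderiv (𝓡 a) 𝓘(ℝ, ℝ) f q.1 = A
  generalize mfderiv (𝓡 b) 𝓘(ℝ, ℝ) g q.2 = B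
  change EuclideanSpace ℝ (Fin a) →L[ℝ] ℝ at A
  change EuclideanSpace ℝ (Fin b) →L[ℝ] ℝ at B
  exact lin_zero A B

lemma count {n : ℕ} (x : EuclideanSpace ℝ (Fin (n+1))) (hx : x ≠ 0) :
    Set.ncard {u : Metric.sphere (0 : EuclideanSpace ℝ (Fin (n + 1))) 1 |
      ∃ ε : ℝ, (ε = 1 ∨ ε = -1) ∧ (u : EuclideanSpace ℝ (Fin (n + 1))) = ε • ‖x‖⁻¹ • x} = 2 := by
  have hn : ‖x‖ ≠ 0 := norm_ne_zero_iff.2 hx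
  let p : Metric.sphere (0 : EuclideanSpace ℝ (Fin (n + 1))) 1 :=
    ⟨‖x‖⁻¹ • x, by simp [norm_smul, hn]⟩
  have hp : p ≠ -p := by
    intro h
    exact ne_neg_of_mem_unit_sphere ℝ p h
  rw [← Set.ncard_pair hp]
  congr 1
  ext u
  simp only [Set.mem_ofPred_eq, Set.mem_insert_iff, Set.mem_singleton_iff, Subtype.ext_iff]
  constructor
  · rintro ⟨ε, rfl | rfl, h⟩
    · left; simpa [p] using h
    · right; simpa [p] using h
  · rintro (h | h)
    · exact ⟨1, Or.inl rfl, by simpa [p] using h⟩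
    · exact ⟨-1, Or.inr rfl, by simpa [p] using h⟩

/-- The height function `ℓ_p`, `p = (x, y)` with `x ≠ 0 ≠ y`, restricted to the
isoparametric hypersurface `S^{a-1}(cos θ) × S^{b-1}(sin θ)` (pulled back to the product
of unit spheres via `(u, v) ↦ (cos θ · u, sin θ · v)`) has critical set exactly
`{(±x/‖x‖, ±y/‖y‖)}`, hence exactly `4 = 2g` critical points. -/
theorem product_of_spheres_height_function_critical_points
    (a b : ℕ) (θ : ℝ) (hθ0 : 0 < θ) (hθ1 : θ < Real.pi / 2)
    (x : EuclideanSpace ℝ (Fin (a + 1))) (y : EuclideanSpace ℝ (Fin (b + 1)))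
    (hx : x ≠ 0) (hy : y ≠ 0) :
    {q : Metric.sphere (0 : EuclideanSpace ℝ (Fin (a + 1))) 1 ×
          Metric.sphere (0 : EuclideanSpace ℝ (Fin (b + 1))) 1 |
        mfderiv ((𝓡 a).prod (𝓡 b)) 𝓘(ℝ, ℝ)
          (fun q : Metric.sphere (0 : EuclideanSpace ℝ (Fin (a + 1))) 1 ×
              Metric.sphere (0 : EuclideanSpace ℝ (Fin (b + 1))) 1 =>
            Real.cos θ * ⟪x, (q.1 : EuclideanSpace ℝ (Fin (a + 1)))⟫ +
              Real.sin θ * ⟪y, (q.2 : EuclideanSpace ℝ (Fin (b + 1)))⟫) q = 0} =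
      {q : Metric.sphere (0 : EuclideanSpace ℝ (Fin (a + 1))) 1 ×
          Metric.sphere (0 : EuclideanSpace ℝ (Fin (b + 1))) 1 |
        ∃ ε δ : ℝ, (ε = 1 ∨ ε = -1) ∧ (δ = 1 ∨ δ = -1) ∧
          (q.1 : EuclideanSpace ℝ (Fin (a + 1))) = ε • ‖x‖⁻¹ • x ∧
          (q.2 : EuclideanSpace ℝ (Fin (b + 1))) = δ • ‖y‖⁻¹ • y} ∧
    Set.ncard {q : Metric.sphere (0 : EuclideanSpace ℝ (Fin (a + 1))) 1 ×
          Metric.sphere (0 : EuclideanSpace ℝ (Fin (b + 1))) 1 |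
        mfderiv ((𝓡 a).prod (𝓡 b)) 𝓘(ℝ, ℝ)
          (fun q : Metric.sphere (0 : EuclideanSpace ℝ (Fin (a + 1))) 1 ×
              Metric.sphere (0 : EuclideanSpace ℝ (Fin (b + 1))) 1 =>
            Real.cos θ * ⟪x, (q.1 : EuclideanSpace ℝ (Fin (a + 1)))⟫ +
              Real.sin θ * ⟪y, (q.2 : EuclideanSpace ℝ (Fin (b + 1)))⟫) q = 0} = 4 := by
  have hc : Real.cos θ ≠ 0 := (Real.cos_pos_of_mem_Ioo ⟨by linarith, hθ1⟩).ne'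
  have hs : Real.sin θ ≠ 0 := (Real.sin_pos_of_pos_of_lt_pi hθ0 (by linarith)).ne'
  rw [and_iff_left_of_imp]
  rotate_left
  · intro h
    rw [h]
    refine Eq.trans ?_ (congrArg₂ (· * ·) (count x hx) (count y hy))
    refine Eq.trans ?_ Set.ncard_prod
    congr 1
    ext q
    constructor
    · rintro ⟨ε, δ, h1, h2, h3, h4⟩
      exact ⟨⟨ε, h1, h3⟩, ⟨δ, h2, h4⟩⟩
    · rintro ⟨⟨ε, h1, h3⟩, ⟨δ, h2, h4⟩⟩
      exact ⟨ε, δ, h1, h2, h3, h4⟩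
  · ext q
    have h := prod_zero a b _ _ q (hasD x (Real.cos θ) q.1).mdifferentiableAt
      (hasD y (Real.sin θ) q.2).mdifferentiableAt
    rw [hasD_zero x hx _ hc, hasD_zero y hy _ hs] at h
    refine h.trans ?_
    constructor
    · rintro ⟨⟨ε, h1, h3⟩, ⟨δ, h2, h4⟩⟩
      exact ⟨ε, δ, h1, h2, h3, h4⟩
    · rintro ⟨ε, δ, h1, h2, h3, h4⟩
      exact ⟨⟨ε, h1, h3⟩, ⟨δ, h2, h4⟩⟩
end

section
/- Let A be a real 3×3 symmetric matrix with trace A = 0, and let B = adjugate(A) − (trace(adjugate A)/3)·1 (the trace-free part of the adjugate). Then trace(Bᵀ B) = (trace(A·A))²/6. Equivalently, the gradient of the Cartan–Münzner cubic F(A) = 3√6·det A, computed within the 5-dimensional inner product space of traceless symmetric 3×3 matrices with the Frobenius inner product, has squared norm 9·‖A‖⁴, verifying Münzner's equation |grad F|² = g²·r^{2g−2} with g = 3. -/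
open Matrix

/-- For a traceless symmetric real 3×3 matrix `A`, the trace-free part `B` of the
adjugate of `A` (which is the gradient of the Cartan–Münzner cubic `F = 3√6·det`, up to
the factor `3√6`, within the space of traceless symmetric matrices) satisfies
`trace(Bᵀ B) = (trace (A·A))² / 6`; equivalently `|grad F|² = 9 ‖A‖⁴`. -/
theorem gradient_of_cartan_munzner_cubic_norm_sq
    (A : Matrix (Fin 3) (Fin 3) ℝ) (hsymm : Aᵀ = A) (htr : A.trace = 0)
    (B : Matrix (Fin 3) (Fin 3) ℝ)
    (hB : B = A.adjugate - ((A.adjugate.trace) / 3) • (1 : Matrix (Fin 3) (Fin 3) ℝ)) :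
    (Bᵀ * B).trace = ((A * A).trace) ^ 2 / 6 := by
  have h1 : A 1 0 = A 0 1 := congrFun (congrFun hsymm 0) 1
  have h2 : A 2 0 = A 0 2 := congrFun (congrFun hsymm 0) 2
  have h3 : A 2 1 = A 1 2 := congrFun (congrFun hsymm 1) 2
  have h4 : A 2 2 = -A 0 0 - A 1 1 := by
    rw [Matrix.trace_fin_three] at htr
    linarith
  subst hB
  rw [Matrix.adjugate_fin_three]
  simp [Matrix.trace_fin_three, Matrix.mul_apply, Fin.sum_univ_three, Matrix.one_apply,
    h1, h2, h3, h4]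
  ring
end

section
/- Let V be the subspace of real 3×3 matrices consisting of symmetric matrices with trace zero (a 5-dimensional real inner product space under the Frobenius inner product ⟪X, Y⟫_F = trace(Xᵀ Y)). Then for every orthonormal basis E₁, …, E₅ of V and every A ∈ V, Σᵢ trace(adjugate(Eᵢ)·A) = 0. Equivalently, the cubic F(A) = 3√6·det A is harmonic on V (its Laplacian vanishes), verifying Münzner's equation ΔF = c·r^{g−2} with c = 0 since the two multiplicities are equal. -/
open Matrix

/-- The Cartan–Münzner cubic `F(A) = 3√6·det A` is harmonic on the 5-dimensional space
`V` of traceless symmetric real 3×3 matrices: for every orthonormal basis `E₁, …, E₅` of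
`V` (with respect to the Frobenius inner product `⟪X, Y⟫ = trace (Xᵀ Y)`) and every
`A ∈ V`, the Laplacian `Σᵢ D²F(A)[Eᵢ, Eᵢ] = 6√6 · Σᵢ trace (adjugate (Eᵢ) · A)`
vanishes. -/
theorem cartan_munzner_cubic_is_harmonic
    (E : Fin 5 → Matrix (Fin 3) (Fin 3) ℝ)
    (hsymm : ∀ i, (E i)ᵀ = E i) (htr : ∀ i, (E i).trace = 0)
    (horth : ∀ i j, ((E i)ᵀ * E j).trace = if i = j then 1 else 0)
    (A : Matrix (Fin 3) (Fin 3) ℝ) (hAsymm : Aᵀ = A) (hAtr : A.trace = 0) :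
    ∑ i, ((E i).adjugate * A).trace = 0 := by
  have hs : ∀ i, E i 1 0 = E i 0 1 ∧ E i 2 0 = E i 0 2 ∧ E i 2 1 = E i 1 2 ∧
      E i 2 2 = -(E i 0 0 + E i 1 1) := by
    intro i
    have h := hsymm i
    have t := htr i
    rw [Matrix.trace_fin_three] at t
    refine ⟨congrFun (congrFun h 0) 1, congrFun (congrFun h 0) 2, congrFun (congrFun h 1) 2, ?_⟩
    linarith
  have hA10 : A 1 0 = A 0 1 := congrFun (congrFun hAsymm 0) 1
  have hA20 : A 2 0 = A 0 2 := congrFun (congrFun hAsymm 0) 2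
  have hA21 : A 2 1 = A 1 2 := congrFun (congrFun hAsymm 1) 2
  have hA22 : A 2 2 = -(A 0 0 + A 1 1) := by
    rw [Matrix.trace_fin_three] at hAtr
    linarith
  -- coordinates of the basis, orthogonal but not normalized
  let P : Matrix (Fin 5) (Fin 5) ℝ := Matrix.of fun i =>
    ![E i 0 0 - E i 1 1, E i 0 0 + E i 1 1, E i 0 1, E i 0 2, E i 1 2]
  let Q : Matrix (Fin 5) (Fin 5) ℝ := Matrix.of fun k i =>
    ![1/2, 3/2, 2, 2, 2] k * P i k
  have hPQ : P * Q = 1 := by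
    ext i j
    have h := horth i j
    obtain ⟨a1, a2, a3, a4⟩ := hs i
    obtain ⟨b1, b2, b3, b4⟩ := hs j
    rw [Matrix.one_apply, ← h]
    simp [Matrix.trace_fin_three, Matrix.mul_apply, Fin.sum_univ_three, Fin.sum_univ_five, P, Q,
      a1, a2, a3, a4, b1, b2, b3, b4]
    ring
  have hQP : Q * P = 1 := mul_eq_one_comm.mp hPQ
  have key : ∀ k l, ∑ i, ![1/2, 3/2, 2, 2, 2] k * P i k * P i l = if k = l then (1 : ℝ) else 0 := by
    intro k l
    have h := congrFun (congrFun hQP k) l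
    rw [Matrix.one_apply, Matrix.mul_apply] at h
    exact h
  have e00 := key 0 0
  have e01 := key 0 1
  have e11 := key 1 1
  have e22 := key 2 2
  have e33 := key 3 3
  have e44 := key 4 4
  have e34 := key 3 4
  have e24 := key 2 4
  have e23 := key 2 3
  have e21 := key 2 1
  have e30 := key 3 0
  have e31 := key 3 1
  have e40 := key 4 0
  have e41 := key 4 1
  have tr : ∀ i, ((E i).adjugate * A).trace =
      A 0 0 * (-(P i 1 * P i 1 - P i 0 * P i 1) / 2 - P i 4 * P i 4)
      + A 1 1 * (-(P i 1 * P i 1 + P i 0 * P i 1) / 2 - P i 3 * P i 3)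
      + A 2 2 * ((P i 1 * P i 1 - P i 0 * P i 0) / 4 - P i 2 * P i 2)
      + 2 * A 0 1 * (P i 3 * P i 4 + P i 2 * P i 1)
      + 2 * A 0 2 * (P i 2 * P i 4 - P i 3 * (P i 1 - P i 0) / 2)
      + 2 * A 1 2 * (P i 2 * P i 3 - P i 4 * (P i 1 + P i 0) / 2) := by
    intro i
    obtain ⟨a1, a2, a3, a4⟩ := hs i
    rw [Matrix.trace_fin_three, Matrix.mul_apply, Matrix.mul_apply, Matrix.mul_apply]
    simp only [Matrix.adjugate_fin_three, Fin.sum_univ_three]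
    simp [P, a1, a2, a3, a4, hA10, hA20, hA21, hA22]
    ring
  simp only [tr]
  clear_value P
  simp [Fin.sum_univ_five] at e00 e01 e11 e22 e33 e44 e34 e24 e23 e21 e30 e31 e40 e41
  rw [Fin.sum_univ_five]
  linear_combination A 0 0 * (-e11 / 3 + e01 - e44 / 2) + A 1 1 * (-e11 / 3 - e01 - e33 / 2)
    + A 2 2 * (e11 / 6 - e00 / 2 - e22 / 2) + 2 * A 0 1 * (e34 / 2 + e21 / 2)
    + 2 * A 0 2 * (e24 / 2 - e31 / 4 + e30 / 4) + 2 * A 1 2 * (e23 / 2 - e41 / 4 - e40 / 4)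
    - 5 / 6 * hA22
end

section
/- Let A be a real 3×3 symmetric matrix with trace A = 0 and trace(A·A) = 1. Then 54·(det A)² ≤ 1; equivalently, |3√6·det A| ≤ 1, so the restriction V of the Cartan–Münzner cubic F(A) = 3√6·det A to the unit sphere of the space of traceless symmetric 3×3 matrices takes values in [−1, 1]. -/
open Matrix

/-- For a traceless symmetric real 3×3 matrix of unit Frobenius norm one has
`54 (det A)² ≤ 1`, i.e. `|3√6 · det A| ≤ 1`: the restriction of the Cartan–Münzner cubic
`F(A) = 3√6 · det A` to the unit sphere `S⁴` of traceless symmetric matrices takes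
values in `[−1, 1]`. -/
theorem cartan_munzner_cubic_maps_sphere_into_Icc
    (A : Matrix (Fin 3) (Fin 3) ℝ) (hsymm : Aᵀ = A) (htr : A.trace = 0)
    (hnorm : (A * A).trace = 1) :
    54 * A.det ^ 2 ≤ 1 ∧ |3 * Real.sqrt 6 * A.det| ≤ 1 := by
  have hA : A.IsHermitian := by
    rw [Matrix.IsHermitian, Matrix.conjTranspose_eq_transpose_of_trivial, hsymm]
  have hd := hA.det_eq_prod_eigenvalues
  have ht := hA.trace_eq_sum_eigenvalues
  have hc := congrArg (Polynomial.eval 1) hA.charpoly_eq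
  rw [Matrix.eval_charpoly, Polynomial.eval_prod] at hc
  simp only [Fin.prod_univ_three, Fin.sum_univ_three, RCLike.ofReal_real_eq_id, id_eq,
    Polynomial.eval_sub, Polynomial.eval_X, Polynomial.eval_C] at hd ht hc
  rw [htr] at ht
  generalize hA.eigenvalues 0 = x at *
  generalize hA.eigenvalues 1 = y at *
  generalize hA.eigenvalues 2 = z at *
  have hsq : x ^ 2 + y ^ 2 + z ^ 2 = 1 := by
    have e : (1 - A).det = 1 - A.trace + (A.trace ^ 2 - (A * A).trace) / 2 - A.det := by
      simp [Matrix.det_fin_three, Matrix.trace_fin_three, Matrix.mul_apply, Fin.sum_univ_three]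
      ring
    have hc' : (1 - A).det = (1 - x) * (1 - y) * (1 - z) := by simpa using hc
    rw [hc', htr, hnorm, hd] at e
    linear_combination -2 * e - (x + y + z) * ht + 2 * ht
  have key : 54 * A.det ^ 2 ≤ 1 := by
    rw [hd]
    obtain rfl : z = -x - y := by linarith
    have hp : x ^ 2 + x * y + y ^ 2 = 1 / 2 := by linarith
    have h3 : (x ^ 2 + x * y + y ^ 2) ^ 3 = 1 / 8 := by rw [hp]; norm_num
    nlinarith [sq_nonneg ((x - y) * (2 * x + y) * (x + 2 * y))]
  refine ⟨key, ?_⟩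
  rw [← sq_le_one_iff_abs_le_one]
  have h6 : Real.sqrt 6 ^ 2 = 6 := Real.sq_sqrt (by norm_num)
  calc (3 * Real.sqrt 6 * A.det) ^ 2 = 9 * Real.sqrt 6 ^ 2 * A.det ^ 2 := by ring
    _ = 54 * A.det ^ 2 := by rw [h6]; ring
    _ ≤ 1 := key
end

section
/- For every unit vector u ∈ ℝ³, the matrix A_u = √(3/2)·(u uᵀ − (1/3)·1) is symmetric, has trace 0, satisfies trace(A_u·A_u) = 1, and satisfies 3√6·det(A_u) = 1. Hence the Veronese surface {A_u : ‖u‖ = 1} lies in the level set V = 1 of the restriction of the Cartan–Münzner cubic F(A) = 3√6·det A to the unit sphere of traceless symmetric 3×3 matrices. -/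
open Matrix

/-- For every unit vector `u ∈ ℝ³`, the matrix `A_u = √(3/2)·(u uᵀ − (1/3)·1)` is
symmetric, traceless, has unit Frobenius norm, and satisfies `3√6 · det A_u = 1`: the
Veronese surface lies in the level set `V = 1` of the Cartan–Münzner cubic
`F(A) = 3√6 · det A` on the unit sphere of traceless symmetric 3×3 matrices. -/
theorem veronese_surface_lies_in_top_level_set
    (u : EuclideanSpace ℝ (Fin 3)) (hu : ‖u‖ = 1)
    (A : Matrix (Fin 3) (Fin 3) ℝ)
    (hA : A = Real.sqrt (3 / 2) •
      (Matrix.of (fun i j => u i * u j) - (1 / 3 : ℝ) • (1 : Matrix (Fin 3) (Fin 3) ℝ))) :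
    Aᵀ = A ∧ A.trace = 0 ∧ (A * A).trace = 1 ∧ 3 * Real.sqrt 6 * A.det = 1 := by
  have hn : u 0 ^ 2 + u 1 ^ 2 + u 2 ^ 2 = 1 := by
    have h := EuclideanSpace.real_norm_sq_eq u
    rw [hu, Fin.sum_univ_three] at h
    linarith
  have hs : Real.sqrt (3 / 2) ^ 2 = 3 / 2 := Real.sq_sqrt (by norm_num)
  have hs6 : Real.sqrt 6 * Real.sqrt (3 / 2) = 3 := by
    rw [← Real.sqrt_mul (by norm_num), show (6 * (3 / 2) : ℝ) = 3 ^ 2 by norm_num]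
    exact Real.sqrt_sq (by norm_num)
  generalize Real.sqrt (3 / 2) = s at *
  generalize Real.sqrt 6 = t at *
  generalize hx : u 0 = x at *
  generalize hy : u 1 = y at *
  generalize hz : u 2 = z at *
  have hA' : A = !![s * (x * x - 1 / 3), s * (x * y), s * (x * z);
      s * (y * x), s * (y * y - 1 / 3), s * (y * z);
      s * (z * x), s * (z * y), s * (z * z - 1 / 3)] := by
    rw [hA]
    ext i j
    fin_cases i <;> fin_cases j <;> simp [hx, hy, hz]
  clear hA
  subst hA'
  refine ⟨?_, ?_, ?_, ?_⟩
  · ext i j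
    fin_cases i <;> fin_cases j <;> simp [mul_comm]
  · simp only [Matrix.trace_fin_three, Matrix.of_apply, Matrix.cons_val]
    linear_combination s * hn
  · simp only [Matrix.trace_fin_three, Matrix.mul_apply, Fin.sum_univ_three,
      Matrix.of_apply, Matrix.cons_val]
    linear_combination s ^ 2 * (x ^ 2 + y ^ 2 + z ^ 2 + 1 / 3) * hn + 2 / 3 * hs
  · simp only [Matrix.det_fin_three, Matrix.of_apply, Matrix.cons_val]
    linear_combination t * s ^ 3 / 3 * hn + 2 / 9 * s ^ 2 * hs6 + 2 / 3 * hs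
end

section
/- Let A be a real 3×3 symmetric matrix with trace A = 0 and trace(A·A) = 1. Then 3√6·det A = 1 if and only if there exists a unit vector u ∈ ℝ³ with A = √(3/2)·(u uᵀ − (1/3)·1). Thus the maximal level set V = 1 of the Cartan–Münzner cubic on S⁴ is exactly the Veronese surface. -/
open Matrix

lemma rank_one_aux (a b c d e f : ℝ) (ht : a + b + c = 1)
    (h1 : a * b = d ^ 2) (h2 : a * c = e ^ 2) (h3 : b * c = f ^ 2)
    (h4 : a * f = d * e) (ha : a ≠ 0) :
    ∃ x y z : ℝ, x ^ 2 + y ^ 2 + z ^ 2 = 1 ∧ x * x = a ∧ y * y = b ∧ z * z = c ∧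
      x * y = d ∧ x * z = e ∧ y * z = f := by
  have hpos : 0 < a := by
    have : a = a ^ 2 + d ^ 2 + e ^ 2 := by linear_combination (-a) * ht + h1 + h2
    have := sq_pos_of_ne_zero ha
    nlinarith [sq_nonneg d, sq_nonneg e]
  obtain ⟨r, hr⟩ : ∃ r : ℝ, r * r = a := ⟨√a, Real.mul_self_sqrt hpos.le⟩
  have hr0 : r ≠ 0 := by rintro rfl; apply ha; rw [← hr]; ring
  have hy : d / r * (d / r) = b := by
    rw [div_mul_div_comm, hr, div_eq_iff ha]; linear_combination -h1
  have hz : e / r * (e / r) = c := by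
    rw [div_mul_div_comm, hr, div_eq_iff ha]; linear_combination -h2
  refine ⟨r, d / r, e / r, by linear_combination hr + hy + hz + ht, hr, hy, hz, ?_, ?_, ?_⟩
  · field_simp
  · field_simp
  · rw [div_mul_div_comm, hr, div_eq_iff ha]; linear_combination -h4

lemma rank_one (a b c d e f : ℝ) (ht : a + b + c = 1)
    (h2 : a * b + a * c + b * c - d ^ 2 - e ^ 2 - f ^ 2 = 0)
    (hd : a * b * c + 2 * d * e * f - a * f ^ 2 - b * e ^ 2 - c * d ^ 2 = 0) :
    ∃ x y z : ℝ, x ^ 2 + y ^ 2 + z ^ 2 = 1 ∧ x * x = a ∧ y * y = b ∧ z * z = c ∧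
      x * y = d ∧ x * z = e ∧ y * z = f := by
  have key : (a * b - d ^ 2) ^ 2 + (a * c - e ^ 2) ^ 2 + (b * c - f ^ 2) ^ 2
      + 2 * (a * f - d * e) ^ 2 + 2 * (b * e - d * f) ^ 2 + 2 * (c * d - e * f) ^ 2 = 0 := by
    linear_combination (a * b + a * c + b * c - d ^ 2 - e ^ 2 - f ^ 2) * h2
      - 2 * (a + b + c) * hd
  have q1 := sq_nonneg (a * b - d ^ 2)
  have q2 := sq_nonneg (a * c - e ^ 2)
  have q3 := sq_nonneg (b * c - f ^ 2)
  have q4 := sq_nonneg (a * f - d * e)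
  have q5 := sq_nonneg (b * e - d * f)
  have q6 := sq_nonneg (c * d - e * f)
  have e1 : a * b - d ^ 2 = 0 := pow_eq_zero_iff two_ne_zero |>.1 (by linarith)
  have e2 : a * c - e ^ 2 = 0 := pow_eq_zero_iff two_ne_zero |>.1 (by linarith)
  have e3 : b * c - f ^ 2 = 0 := pow_eq_zero_iff two_ne_zero |>.1 (by linarith)
  have e4 : a * f - d * e = 0 := pow_eq_zero_iff two_ne_zero |>.1 (by linarith)
  have e5 : b * e - d * f = 0 := pow_eq_zero_iff two_ne_zero |>.1 (by linarith)
  have e6 : c * d - e * f = 0 := pow_eq_zero_iff two_ne_zero |>.1 (by linarith)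
  by_cases ha : a = 0
  · by_cases hb : b = 0
    · have hc : c ≠ 0 := by intro hc; linarith
      obtain ⟨z, x, y, h0, k1, k2, k3, k4, k5, k6⟩ :=
        rank_one_aux c a b e f d (by linarith) (by linarith) (by linarith) (by linarith)
          (by linarith) hc
      exact ⟨x, y, z, by linarith, k2, k3, k1, k6, by linarith, by linarith⟩
    · obtain ⟨y, x, z, h0, k1, k2, k3, k4, k5, k6⟩ :=
        rank_one_aux b a c d f e (by linarith) (by linarith) (by linarith) (by linarith)
          (by linarith) hb
      exact ⟨x, y, z, by linarith, k2, k1, k3, by linarith, k6, k5⟩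
  · exact rank_one_aux a b c d e f ht (by linarith) (by linarith) (by linarith)
      (by linarith) ha

/-- For a traceless symmetric real 3×3 matrix of unit Frobenius norm, `3√6 · det A = 1`
holds if and only if `A = √(3/2)·(u uᵀ − (1/3)·1)` for some unit vector `u ∈ ℝ³`: the
maximal level set `V = 1` of the Cartan–Münzner cubic on `S⁴` is exactly the Veronese
surface. -/
theorem top_level_set_eq_veronese_surface
    (A : Matrix (Fin 3) (Fin 3) ℝ) (hsymm : Aᵀ = A) (htr : A.trace = 0)
    (hnorm : (A * A).trace = 1) :
    3 * Real.sqrt 6 * A.det = 1 ↔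
      ∃ u : EuclideanSpace ℝ (Fin 3), ‖u‖ = 1 ∧
        A = Real.sqrt (3 / 2) •
          (Matrix.of (fun i j => u i * u j) - (1 / 3 : ℝ) • (1 : Matrix (Fin 3) (Fin 3) ℝ)) := by
  have hs : Real.sqrt (3 / 2) = Real.sqrt 6 / 2 := by
    rw [Real.sqrt_eq_iff_mul_self_eq (by norm_num) (by positivity)]
    have := Real.mul_self_sqrt (show (0:ℝ) ≤ 6 by norm_num)
    linear_combination -this / 4
  rw [hs]
  have hs2 : Real.sqrt 6 ^ 2 = 6 := Real.sq_sqrt (by norm_num)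
  generalize Real.sqrt 6 = s at *
  constructor
  · intro hdet
    have s10 : A 1 0 = A 0 1 := congrFun (congrFun hsymm 0) 1
    have s20 : A 2 0 = A 0 2 := congrFun (congrFun hsymm 0) 2
    have s21 : A 2 1 = A 1 2 := congrFun (congrFun hsymm 1) 2
    rw [Matrix.det_fin_three] at hdet
    simp only [Matrix.trace_fin_three, Matrix.mul_apply, Fin.sum_univ_three] at htr hnorm
    rw [s10, s20, s21] at hdet hnorm
    generalize h00 : A 0 0 = a at *
    generalize h11 : A 1 1 = b at *
    generalize h22 : A 2 2 = c at *
    generalize h01 : A 0 1 = d at *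
    generalize h02 : A 0 2 = e at *
    generalize h12 : A 1 2 = f at *
    have E2 : a * b + a * c + b * c - d ^ 2 - e ^ 2 - f ^ 2 = -1 / 2 := by
      linear_combination (a + b + c) / 2 * htr - hnorm / 2
    have E3 : a * b * c + 2 * d * e * f - a * f ^ 2 - b * e ^ 2 - c * d ^ 2 = s / 18 := by
      linear_combination s / 18 * hdet -
        (a * b * c + 2 * d * e * f - a * f ^ 2 - b * e ^ 2 - c * d ^ 2) / 6 * hs2
    obtain ⟨x, y, z, h0, k1, k2, k3, k4, k5, k6⟩ :=
      rank_one (1 / 3 + s / 3 * a) (1 / 3 + s / 3 * b) (1 / 3 + s / 3 * c)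
        (s / 3 * d) (s / 3 * e) (s / 3 * f) (by linear_combination s / 3 * htr)
        (by linear_combination 2 * s / 9 * htr + s ^ 2 / 9 * E2 - hs2 / 18)
        (by linear_combination s / 27 * htr + s ^ 2 / 27 * E2 + s ^ 3 / 27 * E3
              + (s ^ 2 / 486 - 1 / 162) * hs2)
    refine ⟨!₂[x, y, z], ?_, ?_⟩
    · rw [EuclideanSpace.norm_eq, Real.sqrt_eq_one]
      simpa [Fin.sum_univ_three] using h0
    · ext i j
      fin_cases i <;> fin_cases j <;>
        simp [h00, h11, h22, h01, h02, h12, s10, s20, s21, k1, k2, k3, k4, k5, k6,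
          mul_comm y x, mul_comm z x, mul_comm z y]
      · linear_combination -a / 6 * hs2
      · linear_combination -d / 6 * hs2
      · linear_combination -e / 6 * hs2
      · linear_combination -d / 6 * hs2
      · linear_combination -b / 6 * hs2
      · linear_combination -f / 6 * hs2
      · linear_combination -e / 6 * hs2
      · linear_combination -f / 6 * hs2
      · linear_combination -c / 6 * hs2
  · rintro ⟨u, hu, rfl⟩
    rw [EuclideanSpace.norm_eq, Real.sqrt_eq_one] at hu
    simp only [Fin.sum_univ_three, Real.norm_eq_abs, sq_abs] at hu
    rw [Matrix.det_fin_three]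
    simp
    linear_combination s ^ 4 / 24 * hu + (s ^ 2 + 6) / 36 * hs2
end

section
/- Let A be a real 3×3 symmetric matrix with trace A = 0 and trace(A·A) = 1. Then there exist t ∈ [0, π/3] and a real orthogonal 3×3 matrix Q with det Q = 1 such that A = Q · D(t) · Qᵀ, where D(t) = diag(√(2/3)cos(t−π/3), √(2/3)cos(t+π/3), √(2/3)cos(t+π)). Thus the unit sphere S⁴ of traceless symmetric matrices is the union over t ∈ [0, π/3] of the SO(3)-conjugation orbits of the matrices D(t). -/
open Matrix

theorem exists_diag_sorted (A : Matrix (Fin 3) (Fin 3) ℝ) (hsymm : Aᵀ = A) :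
    ∃ (Q : Matrix (Fin 3) (Fin 3) ℝ) (d : Fin 3 → ℝ), Qᵀ * Q = 1 ∧ Q.det = 1 ∧
      d 1 ≤ d 0 ∧ d 2 ≤ d 1 ∧ A = Q * Matrix.diagonal d * Qᵀ := by
  have hA : A.IsHermitian := by
    rw [Matrix.IsHermitian, Matrix.conjTranspose_eq_transpose_of_trivial, hsymm]
  obtain ⟨U, d, hU, hAU⟩ : ∃ (U : Matrix (Fin 3) (Fin 3) ℝ) (d : Fin 3 → ℝ),
      Uᵀ * U = 1 ∧ A = U * Matrix.diagonal d * Uᵀ := by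
    refine ⟨hA.eigenvectorUnitary, hA.eigenvalues, ?_, ?_⟩
    · have h := Unitary.coe_star_mul_self hA.eigenvectorUnitary
      rwa [Matrix.star_eq_conjTranspose, Matrix.conjTranspose_eq_transpose_of_trivial] at h
    · have h := hA.spectral_theorem
      rw [Unitary.conjStarAlgAut_apply, Matrix.star_eq_conjTranspose,
        Matrix.conjTranspose_eq_transpose_of_trivial] at h
      exact h
  let σ := Tuple.sort (fun i => - d i)
  have hmono : Monotone ((fun i => - d i) ∘ σ) := Tuple.monotone_sort _
  have h01 : d (σ 1) ≤ d (σ 0) := by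
    have := hmono (show (0 : Fin 3) ≤ 1 by decide)
    simpa using this
  have h12 : d (σ 2) ≤ d (σ 1) := by
    have := hmono (show (1 : Fin 3) ≤ 2 by decide)
    simpa using this
  let V := U.submatrix id σ
  have hV : Vᵀ * V = 1 := by
    have : Vᵀ * V = (Uᵀ * U).submatrix σ σ := by
      ext i j
      simp [V, Matrix.mul_apply]
    rw [this, hU]
    simp
  have hAV : A = V * Matrix.diagonal (d ∘ σ) * Vᵀ := by
    rw [hAU]
    ext i j
    rw [Matrix.mul_apply, Matrix.mul_apply]
    simp only [V, Matrix.mul_diagonal, Matrix.transpose_apply,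
      Matrix.submatrix_apply, id, Function.comp]
    exact (Equiv.sum_comp σ (fun k => U i k * d k * U j k)).symm
  have hdet : V.det * V.det = 1 := by
    have := congrArg Matrix.det hV
    simpa using this
  rcases mul_self_eq_one_iff.mp hdet with h | h
  · exact ⟨V, d ∘ σ, hV, h, h01, h12, hAV⟩
  · refine ⟨-V, d ∘ σ, by simpa using hV, ?_, h01, h12, by simpa using hAV⟩
    rw [Matrix.det_neg, h]
    norm_num

theorem exists_angle (a b c : ℝ) (hab : b ≤ a) (hbc : c ≤ b) (hs : a + b + c = 0)
    (hn : a * a + b * b + c * c = 1) :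
    ∃ t ∈ Set.Icc (0 : ℝ) (Real.pi / 3),
      a = Real.sqrt (2 / 3) * Real.cos (t - Real.pi / 3) ∧
      b = Real.sqrt (2 / 3) * Real.cos (t + Real.pi / 3) ∧
      c = Real.sqrt (2 / 3) * Real.cos (t + Real.pi) := by
  obtain ⟨r, hr⟩ : ∃ r, r = Real.sqrt (2 / 3) := ⟨_, rfl⟩
  have hr0 : 0 < r := by rw [hr]; positivity
  have hr2 : r * r = 2 / 3 := by rw [hr]; exact Real.mul_self_sqrt (by norm_num)
  rw [← hr]
  have ha : a = -b - c := by linarith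
  have hc0 : c ≤ 0 := by linarith
  obtain ⟨x, hx⟩ : ∃ x, x = -c / r := ⟨_, rfl⟩
  have hcx : c = -(r * x) := by rw [hx]; field_simp
  have hx0 : 0 ≤ x := by rw [hx]; exact div_nonneg (by linarith) hr0.le
  have hc2 : c * c = 2 / 3 * (x * x) := by rw [← hr2, hcx]; ring
  have hdisc : (a - b) * (a - b) = 2 - 3 * (c * c) := by
    subst ha; linarith [hn]
  have hx1 : x ≤ 1 := by nlinarith [mul_self_nonneg (a - b)]
  have hx2 : 1 / 2 ≤ x := by
    have h : 0 ≤ (b - c) * (a - c) := mul_nonneg (by linarith) (by linarith)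
    have h6 : 1 ≤ 6 * (c * c) := by subst ha; nlinarith
    nlinarith
  refine ⟨Real.arccos x, ⟨Real.arccos_nonneg x, ?_⟩, ?_⟩
  · have : Real.pi / 3 = Real.arccos (1 / 2) := by
      rw [← Real.cos_pi_div_three, Real.arccos_cos] <;> linarith [Real.pi_pos]
    rw [this]
    exact Real.arccos_le_arccos hx2
  have hcos : Real.cos (Real.arccos x) = x := Real.cos_arccos (by linarith) hx1
  obtain ⟨s, hsd⟩ : ∃ s, s = Real.sin (Real.arccos x) := ⟨_, rfl⟩
  have hs0 : 0 ≤ s := by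
    rw [hsd]; exact Real.sin_nonneg_of_nonneg_of_le_pi (Real.arccos_nonneg x) (Real.arccos_le_pi x)
  have hs2 : s * s = 1 - x * x := by
    have := Real.sin_sq_add_cos_sq (Real.arccos x)
    rw [hcos, ← hsd] at this
    linarith
  have h3 : Real.sqrt 3 * Real.sqrt 3 = 3 := Real.mul_self_sqrt (by norm_num)
  have hd : a - b = r * Real.sqrt 3 * s := by
    have h1 : 0 ≤ a - b := by linarith
    have h2 : 0 ≤ r * Real.sqrt 3 * s := by positivity
    refine (mul_self_inj h1 h2).mp ?_
    rw [hdisc, hc2, show r * Real.sqrt 3 * s * (r * Real.sqrt 3 * s)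
      = (r * r) * (Real.sqrt 3 * Real.sqrt 3) * (s * s) by ring, hr2, h3, hs2]
    ring
  rw [Real.cos_sub, Real.cos_add, Real.cos_add_pi, hcos, ← hsd, Real.cos_pi_div_three,
    Real.sin_pi_div_three]
  refine ⟨?_, ?_, ?_⟩ <;> linarith

/-- Every traceless symmetric real 3×3 matrix of unit Frobenius norm is conjugate, by a
special orthogonal matrix, to `D(t) = diag(√(2/3)cos(t−π/3), √(2/3)cos(t+π/3),
√(2/3)cos(t+π))` for some `t ∈ [0, π/3]`: the unit sphere `S⁴` of traceless symmetric
matrices is the union of the `SO(3)`-conjugation orbits of the matrices `D(t)`. -/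
theorem sphere_of_traceless_symmetric_is_union_of_orbits
    (A : Matrix (Fin 3) (Fin 3) ℝ) (hsymm : Aᵀ = A) (htr : A.trace = 0)
    (hnorm : (A * A).trace = 1) :
    ∃ t ∈ Set.Icc (0 : ℝ) (Real.pi / 3), ∃ Q : Matrix (Fin 3) (Fin 3) ℝ,
      Qᵀ * Q = 1 ∧ Q.det = 1 ∧
      A = Q * Matrix.diagonal
        ![Real.sqrt (2 / 3) * Real.cos (t - Real.pi / 3),
          Real.sqrt (2 / 3) * Real.cos (t + Real.pi / 3),
          Real.sqrt (2 / 3) * Real.cos (t + Real.pi)] * Qᵀ := by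
  obtain ⟨Q, d, hQ, hdet, h01, h12, hA⟩ := exists_diag_sorted A hsymm
  have htd : d 0 + d 1 + d 2 = 0 := by
    rw [hA, Matrix.trace_mul_comm, ← Matrix.mul_assoc, hQ, Matrix.one_mul, Matrix.trace_diagonal,
      Fin.sum_univ_three] at htr
    exact htr
  have hnd : d 0 * d 0 + d 1 * d 1 + d 2 * d 2 = 1 := by
    have hAA : A * A = Q * (Matrix.diagonal d * Matrix.diagonal d * Qᵀ) := by
      calc A * A = Q * Matrix.diagonal d * (Qᵀ * Q) * Matrix.diagonal d * Qᵀ := by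
            rw [hA]; simp only [Matrix.mul_assoc]
        _ = _ := by rw [hQ]; simp only [Matrix.mul_assoc, Matrix.one_mul]
    rw [hAA, Matrix.trace_mul_comm, Matrix.mul_assoc, hQ, Matrix.mul_one,
      Matrix.diagonal_mul_diagonal, Matrix.trace_diagonal, Fin.sum_univ_three] at hnorm
    exact hnorm
  obtain ⟨t, ht, h0, h1, h2⟩ := exists_angle (d 0) (d 1) (d 2) h01 h12 htd hnd
  refine ⟨t, ht, Q, hQ, hdet, ?_⟩
  rw [← h0, ← h1, ← h2]
  have hd : ![d 0, d 1, d 2] = d := by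
    ext i; fin_cases i <;> rfl
  rw [hd]
  exact hA
end

section
/- Let P be a real symmetric 3×3 matrix with three distinct eigenvalues, let t ∈ (0, π/3), and let D(t) = diag(√(2/3)cos(t−π/3), √(2/3)cos(t+π/3), √(2/3)cos(t+π)). Then the set { A : (∃ orthogonal Q with det Q = 1, A = Q·D(t)·Qᵀ) and A·P = P·A } has exactly 6 elements. (Since A ∈ M_t is a critical point of the height function ℓ_P(A) = trace(P·A) exactly when A·P = P·A, the height function ℓ_P has exactly 6 = 2g critical points on Cartan's isoparametric hypersurface M_t, exhibiting its tightness.) -/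
open Matrix

theorem cartan_aux_diag_injective (t : ℝ) (ht0 : 0 < t) (ht1 : t < Real.pi / 3) :
    Function.Injective ![Real.sqrt (2 / 3) * Real.cos (t - Real.pi / 3),
              Real.sqrt (2 / 3) * Real.cos (t + Real.pi / 3),
              Real.sqrt (2 / 3) * Real.cos (t + Real.pi)] := by
  have hs : 0 < Real.sqrt (2 / 3) := by positivity
  have h1 : Real.cos (t + Real.pi / 3) < Real.cos (t - Real.pi / 3) := by
    rw [← Real.cos_neg (t - Real.pi / 3)]
    apply Real.cos_lt_cos_of_nonneg_of_le_pi <;> linarith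
  have h2 : Real.cos (t + Real.pi) < Real.cos (t + Real.pi / 3) := by
    rw [Real.cos_add_pi, ← Real.cos_pi_sub]
    apply Real.cos_lt_cos_of_nonneg_of_le_pi <;> linarith
  have h1' := mul_lt_mul_of_pos_left h1 hs
  have h2' := mul_lt_mul_of_pos_left h2 hs
  clear h1 h2
  generalize Real.sqrt (2 / 3) * Real.cos (t - Real.pi / 3) = a at *
  generalize Real.sqrt (2 / 3) * Real.cos (t + Real.pi / 3) = b at *
  generalize Real.sqrt (2 / 3) * Real.cos (t + Real.pi) = c at *
  intro i j hij
  fin_cases i <;> fin_cases j <;> simp at hij ⊢ <;> linarith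

theorem cartan_aux_card (P U : Matrix (Fin 3) (Fin 3) ℝ) (l d : Fin 3 → ℝ)
    (hl : Function.Injective l) (hd : Function.Injective d)
    (hU : Uᵀ * U = 1) (hP : P = U * diagonal l * Uᵀ) :
    Set.ncard {A : Matrix (Fin 3) (Fin 3) ℝ |
        (∃ Q : Matrix (Fin 3) (Fin 3) ℝ, Qᵀ * Q = 1 ∧ Q.det = 1 ∧
          A = Q * Matrix.diagonal d * Qᵀ) ∧ A * P = P * A} = 6 := by
  have hU' : U * Uᵀ = 1 := mul_eq_one_comm.mp hU
  have key : {A : Matrix (Fin 3) (Fin 3) ℝ |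
        (∃ Q : Matrix (Fin 3) (Fin 3) ℝ, Qᵀ * Q = 1 ∧ Q.det = 1 ∧
          A = Q * Matrix.diagonal d * Qᵀ) ∧ A * P = P * A} =
      Set.range (fun σ : Equiv.Perm (Fin 3) => U * diagonal (d ∘ σ) * Uᵀ) := by
    ext A
    simp only [Set.mem_ofPred_eq, Set.mem_range]
    constructor
    · rintro ⟨⟨Q, hQ, -, hA⟩, hc⟩
      have hAB : A = U * (Uᵀ * A * U) * Uᵀ := by
        calc A = (U * Uᵀ) * A * (U * Uᵀ) := by rw [hU']; simp
          _ = _ := by simp only [Matrix.mul_assoc]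
      set B := Uᵀ * A * U with hB
      have hcB : B * diagonal l = diagonal l * B := by
        have e1 : B * diagonal l = Uᵀ * (A * P) * U := by
          calc B * diagonal l = Uᵀ * A * U * diagonal l * (Uᵀ * U) := by rw [hU, hB]; simp
            _ = _ := by rw [hP]; simp only [Matrix.mul_assoc]
        have e2 : diagonal l * B = Uᵀ * (P * A) * U := by
          calc diagonal l * B = (Uᵀ * U) * diagonal l * (Uᵀ * A * U) := by rw [hU, hB]; simp
            _ = _ := by rw [hP]; simp only [Matrix.mul_assoc]
        rw [e1, e2, hc]
      have hBd : B = diagonal (fun i => B i i) := by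
        ext i j
        by_cases hij : i = j
        · subst hij; simp
        · rw [diagonal_apply_ne _ hij]
          have := congrFun (congrFun hcB i) j
          rw [mul_diagonal, diagonal_mul] at this
          have hne : l j - l i ≠ 0 := sub_ne_zero.mpr fun h => hij (hl h).symm
          have : B i j * (l j - l i) = 0 := by linarith
          exact (mul_eq_zero.mp this).resolve_right hne
      have hch : B.charpoly = (diagonal d).charpoly := by
        have e1 : B.charpoly = A.charpoly := by
          rw [hB, Matrix.charpoly_mul_comm, ← Matrix.mul_assoc, hU', Matrix.one_mul]
        rw [e1, hA, Matrix.charpoly_mul_comm, ← Matrix.mul_assoc, hQ, Matrix.one_mul]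
      rw [hBd, charpoly_diagonal, charpoly_diagonal] at hch
      have hr := congrArg Polynomial.roots hch
      have hroots : ∀ g : Fin 3 → ℝ,
          (∏ i, (Polynomial.X - Polynomial.C (g i))).roots = Finset.univ.val.map g := by
        intro g
        have h := Polynomial.roots_multiset_prod_X_sub_C (Finset.univ.val.map g)
        rw [Multiset.map_map] at h
        exact h
      rw [hroots, hroots] at hr
      have hbinj : Function.Injective (fun i => B i i) := by
        rw [← Fintype.nodup_map_univ_iff_injective, hr, Fintype.nodup_map_univ_iff_injective]
        exact hd
      have hmem : ∀ i, ∃ j, d j = B i i := by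
        intro i
        have h : B i i ∈ Finset.univ.val.map d := by
          rw [← hr]
          exact Multiset.mem_map_of_mem (fun i => B i i) (Finset.mem_univ i)
        obtain ⟨j, -, hj⟩ := Multiset.mem_map.mp h
        exact ⟨j, hj⟩
      choose f hf using hmem
      have hfinj : Function.Injective f := by
        intro i j hij
        apply hbinj
        simp only [← hf, hij]
      let σ : Equiv.Perm (Fin 3) := Equiv.ofBijective f (Finite.injective_iff_bijective.mp hfinj)
      have hσ : (fun i => B i i) = d ∘ σ := by
        funext i
        exact (hf i).symm
      refine ⟨σ, ?_⟩
      rw [hAB, hBd, hσ]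
    · rintro ⟨σ, rfl⟩
      constructor
      · set V := U.submatrix id σ.symm with hV
        have hVV : Vᵀ * V = 1 := by
          rw [hV, transpose_submatrix, submatrix_mul _ _ _ id _ Function.bijective_id |>.symm, hU]
          simp
        have hdet : V.det * V.det = 1 := by
          have := congrArg det hVV
          simpa using this
        have hVD : U * diagonal (d ∘ σ) * Uᵀ = V * diagonal d * Vᵀ := by
          ext i j
          rw [Matrix.mul_apply, Matrix.mul_apply,
            ← Equiv.sum_comp σ (fun k => (V * diagonal d) i k * Vᵀ k j)]
          simp [hV, mul_diagonal]
        refine ⟨V.det • V, ?_, ?_, ?_⟩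
        · rw [transpose_smul, smul_mul_smul_comm, hdet, hVV, one_smul]
        · rw [det_smul]
          simp only [Fintype.card_fin]
          linear_combination (V.det ^ 2 + 1) * hdet
        · rw [hVD, transpose_smul, Matrix.smul_mul, smul_mul_smul_comm, hdet, one_smul]
      · have h : ∀ a b : Fin 3 → ℝ, (U * diagonal a * Uᵀ) * (U * diagonal b * Uᵀ)
            = U * diagonal (fun i => a i * b i) * Uᵀ := by
          intro a b
          calc _ = U * diagonal a * (Uᵀ * U) * diagonal b * Uᵀ := by
                simp only [Matrix.mul_assoc]
            _ = _ := by
                rw [hU, Matrix.mul_one, Matrix.mul_assoc U, diagonal_mul_diagonal]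
        rw [hP, h, h]
        simp only [mul_comm]
  rw [key, ← Set.image_univ, Set.ncard_image_of_injective, Set.ncard_univ]
  · rw [Nat.card_eq_fintype_card, Fintype.card_perm]; rfl
  · intro σ τ h
    have h2 : diagonal (d ∘ σ) = diagonal (d ∘ τ) := by
      have h3 : ∀ X : Matrix (Fin 3) (Fin 3) ℝ, X = Uᵀ * (U * X * Uᵀ) * U := by
        intro X
        calc X = (Uᵀ * U) * X * (Uᵀ * U) := by rw [hU]; simp
          _ = _ := by simp only [Matrix.mul_assoc]
      rw [h3 (diagonal (d ∘ σ)), h3 (diagonal (d ∘ τ))]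
      exact congrArg (fun Y => Uᵀ * Y * U) h
    have h4 := diagonal_injective h2
    ext i
    exact congrArg Fin.val (hd (congrFun h4 i))

/-- Let `P` be a real symmetric 3×3 matrix with three distinct eigenvalues and let
`t ∈ (0, π/3)`. Then there are exactly `6 = 2g` matrices in Cartan's isoparametric
hypersurface `M_t` (the `SO(3)`-conjugation orbit of `D(t)`) that commute with `P`,
i.e. the height function `ℓ_P(A) = trace (P·A)` has exactly 6 critical points on `M_t`,
exhibiting its tightness. -/
theorem height_function_has_six_critical_points_on_cartan_hypersurface
    (P : Matrix (Fin 3) (Fin 3) ℝ) (hP : P.IsHermitian)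
    (hdist : Function.Injective hP.eigenvalues)
    (t : ℝ) (ht0 : 0 < t) (ht1 : t < Real.pi / 3) :
    Set.ncard {A : Matrix (Fin 3) (Fin 3) ℝ |
        (∃ Q : Matrix (Fin 3) (Fin 3) ℝ, Qᵀ * Q = 1 ∧ Q.det = 1 ∧
          A = Q * Matrix.diagonal
            ![Real.sqrt (2 / 3) * Real.cos (t - Real.pi / 3),
              Real.sqrt (2 / 3) * Real.cos (t + Real.pi / 3),
              Real.sqrt (2 / 3) * Real.cos (t + Real.pi)] * Qᵀ) ∧
        A * P = P * A} = 6 := by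
  have hsp := hP.spectral_theorem
  refine cartan_aux_card P (hP.eigenvectorUnitary : Matrix (Fin 3) (Fin 3) ℝ) hP.eigenvalues _
    hdist (cartan_aux_diag_injective t ht0 ht1) ?_ ?_
  · have := Unitary.coe_star_mul_self hP.eigenvectorUnitary
    simpa [star_eq_conjTranspose] using this
  · rw [Unitary.conjStarAlgAut_apply] at hsp
    exact hsp
end

section
/- Let P be a real symmetric 3×3 matrix and consider the smooth function q(u) = ⟪P u, u⟫ on the unit sphere S² of ℝ³. Then a unit vector u is a critical point of q (i.e., the mfderiv of q on the sphere vanishes at u) if and only if P u = ⟪P u, u⟫·u, that is, u is a unit eigenvector of P. Moreover, if P has three distinct eigenvalues, the set of critical points of q on S² has exactly 6 elements. (Since the Veronese map u ↦ A_u identifies antipodes and satisfies trace(P·A_u) = √(3/2)·(q(u) − trace(P)/3), the height function ℓ_P has exactly 3 = g critical points on the Veronese surface, exhibiting the tightness of this focal submanifold.) -/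
open scoped RealInnerProductSpace Manifold

open Matrix

abbrev E3 := EuclideanSpace ℝ (Fin 3)

theorem toEucl_symm (P : Matrix (Fin 3) (Fin 3) ℝ) (hP : P.IsHermitian) (x y : E3) :
    ⟪Matrix.toEuclideanLin P x, y⟫ = ⟪x, Matrix.toEuclideanLin P y⟫ :=
  (Matrix.isSymmetric_toEuclideanLin_iff.2 hP) x y

theorem crit_iff (P : Matrix (Fin 3) (Fin 3) ℝ) (hP : P.IsHermitian)
    (u : Metric.sphere (0 : E3) 1) :
    mfderiv (𝓡 2) 𝓘(ℝ, ℝ)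
          (fun v : Metric.sphere (0 : E3) 1 =>
            ⟪Matrix.toEuclideanLin P (v : E3), (v : E3)⟫) u = 0 ↔
        Matrix.toEuclideanLin P (u : E3) =
          ⟪Matrix.toEuclideanLin P (u : E3), (u : E3)⟫ • (u : E3) := by
  set T : E3 →L[ℝ] E3 := LinearMap.toContinuousLinearMap (Matrix.toEuclideanLin P) with hT
  have hTa : ∀ x, Matrix.toEuclideanLin P x = T x := fun x => rfl
  have hsym : ∀ x y, ⟪T x, y⟫ = ⟪x, T y⟫ := toEucl_symm P hP
  simp only [hTa]
  have hQ : HasFDerivAt (fun x : E3 => ⟪T x, x⟫) ((2 : ℝ) • innerSL ℝ (T u)) (u : E3) := by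
    have h := (T.hasFDerivAt (x := (u : E3))).inner ℝ (hasFDerivAt_id (u : E3))
    refine h.congr_fderiv ?_
    ext w
    have e1 : ⟪(u : E3), T w⟫ = ⟪T u, w⟫ := (hsym u w).symm
    have e2 : ⟪T w, (u : E3)⟫ = ⟪T u, w⟫ := by rw [real_inner_comm, e1]
    change ⟪T u, w⟫ + ⟪T w, (u : E3)⟫ = 2 * ⟪T u, w⟫
    rw [e2, two_mul]
  have hc : MDifferentiableAt (𝓡 2) 𝓘(ℝ, E3) ((↑) : Metric.sphere (0 : E3) 1 → E3) u :=
    (contMDiff_coe_sphere (m := 1) (n := 2) u).mdifferentiableAt (by simp)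
  have hcomp := mfderiv_comp (I := 𝓡 2) (I' := 𝓘(ℝ, E3)) (I'' := 𝓘(ℝ, ℝ)) u
    (g := fun x : E3 => ⟪T x, x⟫) hQ.differentiableAt.mdifferentiableAt hc
  have hr := range_mfderiv_coe_sphere (n := 2) u
  have hcomp2 : mfderiv (𝓡 2) 𝓘(ℝ, ℝ)
      (fun v : Metric.sphere (0 : E3) 1 => ⟪Matrix.toEuclideanLin P (v : E3), (v : E3)⟫) u = _ := hcomp
  rw [hcomp2, mfderiv_eq_fderiv, hQ.fderiv]
  have hu : ‖(u : E3)‖ = 1 := by simpa using u.2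
  have key : (∀ w ∈ (Submodule.span ℝ {(u : E3)})ᗮ, ⟪T u, w⟫ = 0) ↔
      T u = ⟪T u, (u : E3)⟫ • (u : E3) := by
    constructor
    · intro h
      have : T u ∈ (Submodule.span ℝ {(u : E3)})ᗮᗮ := by
        rw [Submodule.mem_orthogonal']
        exact h
      rw [Submodule.orthogonal_orthogonal, Submodule.mem_span_singleton] at this
      obtain ⟨c, hc⟩ := this
      rw [← hc, inner_smul_left, real_inner_self_eq_norm_sq, hu]
      simp
    · intro h w hw
      rw [h, inner_smul_left, Submodule.mem_orthogonal_singleton_iff_inner_right.1 hw, mul_zero]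
  rw [← key, ← hr]
  constructor
  · rintro h w ⟨t, rfl⟩
    have := DFunLike.congr_fun h t
    have h2 : (2 : ℝ) * ⟪T u, mfderiv (𝓡 2) 𝓘(ℝ, E3) ((↑) : Metric.sphere (0 : E3) 1 → E3) u t⟫
      = 0 := this
    have := (mul_eq_zero.1 h2).resolve_left two_ne_zero
    exact this
  · intro h
    ext t
    have h2 := h _ ⟨t, rfl⟩
    have h3 : (2 : ℝ) * ⟪T u, mfderiv (𝓡 2) 𝓘(ℝ, E3) ((↑) : Metric.sphere (0 : E3) 1 → E3) u t⟫
      = 0 := by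
        rw [mul_eq_zero]; right; exact h2
    exact h3

theorem crit_count (P : Matrix (Fin 3) (Fin 3) ℝ) (hP : P.IsHermitian)
    (hinj : Function.Injective hP.eigenvalues) :
    Set.ncard {u : Metric.sphere (0 : E3) 1 | Matrix.toEuclideanLin P (u : E3) =
          ⟪Matrix.toEuclideanLin P (u : E3), (u : E3)⟫ • (u : E3)} = 6 := by
  set b := hP.eigenvectorBasis with hb
  have hbe : ∀ i, Matrix.toEuclideanLin P (b i) = hP.eigenvalues i • b i := by
    intro i
    have := hP.mulVec_eigenvectorBasis i
    ext j
    exact congrFun this j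
  have hbn : ∀ i, ‖b i‖ = 1 := b.orthonormal.1
  let s : Bool → ℝ := fun e => if e then 1 else -1
  have hs : ∀ e, s e * s e = 1 := by intro e; cases e <;> simp [s]
  have hsn : ∀ e, ‖s e‖ = 1 := by intro e; cases e <;> simp [s]
  let f : Fin 3 × Bool → Metric.sphere (0 : E3) 1 := fun p =>
    ⟨s p.2 • b p.1, by simp [norm_smul, hsn, hbn]⟩
  have hf : Function.Injective f := by
    rintro ⟨i, e⟩ ⟨j, e'⟩ h
    have h1 : s e • b i = s e' • b j := congrArg Subtype.val h
    have h2 := congrArg (fun x => ⟪b i, x⟫) h1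
    simp only [inner_smul_right, orthonormal_iff_ite.1 b.orthonormal] at h2
    by_cases hij : i = j
    · subst hij
      cases e <;> cases e' <;> simp [s] at h2 ⊢ <;> norm_num at h2
    · exfalso
      cases e <;> simp [s, hij] at h2
  have hset : {u : Metric.sphere (0 : E3) 1 | Matrix.toEuclideanLin P (u : E3) =
          ⟪Matrix.toEuclideanLin P (u : E3), (u : E3)⟫ • (u : E3)} = Set.range f := by
    ext u
    simp only [Set.mem_setOf_eq, Set.mem_range]
    constructor
    · intro h
      generalize ⟪Matrix.toEuclideanLin P (u : E3), (u : E3)⟫ = c at h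
      have hu : ‖(u : E3)‖ = 1 := by simpa using u.2
      have h1 : ∀ i, ⟪b i, (u : E3)⟫ ≠ 0 → hP.eigenvalues i = c := by
        intro i hi
        have h2 := toEucl_symm P hP (b i) u
        rw [hbe, h, inner_smul_left, inner_smul_right] at h2
        exact mul_right_cancel₀ hi h2
      obtain ⟨i, hi⟩ : ∃ i, ⟪b i, (u : E3)⟫ ≠ 0 := by
        by_contra! hn
        have := b.sum_repr' (u : E3)
        simp only [hn, zero_smul, Finset.sum_const_zero] at this
        rw [← this] at hu
        simp at hu
      have h3 : (u : E3) = ⟪b i, (u : E3)⟫ • b i := by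
        conv_lhs => rw [← b.sum_repr' (u : E3)]
        rw [Finset.sum_eq_single i]
        · intro j _ hj
          by_cases hz : ⟪b j, (u : E3)⟫ = 0
          · rw [hz, zero_smul]
          · exact absurd (hinj ((h1 j hz).trans (h1 i hi).symm)) hj
        · simp
      have h4 : |⟪b i, (u : E3)⟫| = 1 := by
        have := congrArg norm h3
        rw [norm_smul, hbn, hu, mul_one] at this
        exact this.symm
      rcases eq_or_eq_neg_of_abs_eq h4 with h5 | h5
      · refine ⟨(i, true), Subtype.ext ?_⟩
        rw [h3, h5]; simp [f, s]
      · refine ⟨(i, false), Subtype.ext ?_⟩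
        rw [h3, h5]; simp [f, s]
    · rintro ⟨⟨i, e⟩, rfl⟩
      change Matrix.toEuclideanLin P (s e • b i) =
        ⟪Matrix.toEuclideanLin P (s e • b i), s e • b i⟫ • (s e • b i)
      have h6 : ⟪Matrix.toEuclideanLin P (s e • b i), s e • b i⟫ = hP.eigenvalues i := by
        rw [map_smul, hbe, real_inner_smul_left, real_inner_smul_left, real_inner_smul_right,
          real_inner_self_eq_norm_sq, hbn]
        linear_combination hP.eigenvalues i * hs e
      rw [h6, map_smul, hbe, smul_comm]
  rw [hset, ← Set.image_univ, Set.ncard_image_of_injective _ hf, Set.ncard_univ]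
  simp

/-- For a real symmetric 3×3 matrix `P`, a point `u` of the unit sphere `S² ⊂ ℝ³` is a
critical point of the quadratic form `q(u) = ⟪P u, u⟫` on `S²` iff `P u = ⟪P u, u⟫ • u`,
i.e. iff `u` is a unit eigenvector of `P`; and if `P` has three distinct eigenvalues
then `q` has exactly 6 critical points on `S²`. -/
theorem quadratic_form_critical_points_on_sphere
    (P : Matrix (Fin 3) (Fin 3) ℝ) (hP : P.IsHermitian) :
    (∀ u : Metric.sphere (0 : EuclideanSpace ℝ (Fin 3)) 1,
      (mfderiv (𝓡 2) 𝓘(ℝ, ℝ)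
          (fun v : Metric.sphere (0 : EuclideanSpace ℝ (Fin 3)) 1 =>
            ⟪Matrix.toEuclideanLin P (v : EuclideanSpace ℝ (Fin 3)),
              (v : EuclideanSpace ℝ (Fin 3))⟫) u = 0 ↔
        Matrix.toEuclideanLin P (u : EuclideanSpace ℝ (Fin 3)) =
          ⟪Matrix.toEuclideanLin P (u : EuclideanSpace ℝ (Fin 3)),
              (u : EuclideanSpace ℝ (Fin 3))⟫ • (u : EuclideanSpace ℝ (Fin 3)))) ∧
    (Function.Injective hP.eigenvalues →
      Set.ncard {u : Metric.sphere (0 : EuclideanSpace ℝ (Fin 3)) 1 |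
        mfderiv (𝓡 2) 𝓘(ℝ, ℝ)
          (fun v : Metric.sphere (0 : EuclideanSpace ℝ (Fin 3)) 1 =>
            ⟪Matrix.toEuclideanLin P (v : EuclideanSpace ℝ (Fin 3)),
              (v : EuclideanSpace ℝ (Fin 3))⟫) u = 0} = 6) := by
  refine ⟨crit_iff P hP, fun hinj => ?_⟩
  rw [← crit_count P hP hinj]
  congr 1
  ext u
  exact crit_iff P hP u
end
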